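/- Small-noise expansion of the uniform-corrupted marginal (Lemma B.1). For every x ∈ X there exist constants C > 0 and σ₀ ∈ (0,1) such that for all σ ∈ (0,σ₀): |q_σ(x) − p_data(proj_D(x)) · (σ/K)^{d(x,D)}| ≤ C · (σ/K)^{d(x,D)+1}. -/

import Mathlib

open scoped Classical

/-- Uniform-corrupted marginal `q_σ(x) = Σ_{x0} p(x0) ∏_i ((1−σ)1{x^i=x0^i} + σ/K)`. -/
noncomputable def qUnif (K H : ℕ) (p : (Fin H → Fin K) → ℝ) (σ : ℝ)
    (x : Fin H → Fin K) : ℝ :=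
  ∑ x0 : Fin H → Fin K, p x0 *
    ∏ i : Fin H, ((1 - σ) * (if x i = x0 i then (1 : ℝ) else 0) + σ / K)

/-- Hamming distance from `x` to the support `D = {z : p z ≠ 0}` of `p`. -/
noncomputable def distSupp (K H : ℕ) (p : (Fin H → Fin K) → ℝ)
    (x : Fin H → Fin K) : ℕ :=
  sInf {n : ℕ | ∃ z : Fin H → Fin K, p z ≠ 0 ∧ hammingDist x z = n}

/-- Total `p`-mass of the set `proj_D(x)` of nearest in-support strings to `x`. -/
noncomputable def projMass (K H : ℕ) (p : (Fin H → Fin K) → ℝ)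
    (x : Fin H → Fin K) : ℝ :=
  ∑ z ∈ Finset.univ.filter
      (fun z : Fin H → Fin K => p z ≠ 0 ∧ hammingDist x z = distSupp K H p x), p z

/-!
With `t = σ / K`, a clean string at distance `d` from `x` is corrupted into `x` with probability
`(1 - σ + t) ^ (H - d) * t ^ d`, which is at most `t ^ d` and, by Bernoulli's inequality, differs
from it by at most `H * (σ - t) * t ^ d = O(t ^ (d + 1))`. Hence the nearest strings of the support
contribute the main term with an error of order `t ^ (d(x, D) + 1)`, and every other string of the
support contributes only to that order.
-/

section CorruptionKernel

variable {ι α : Type*} [Fintype ι] [DecidableEq α]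

/-- The weight of the transition from the clean string `z` to the noisy string `x` when each
coordinate is kept with weight `1 - σ` and every symbol receives the additional weight `t`; for
uniform corruption over `K` letters, `t = σ / K`. -/
noncomputable def corruptionKernel (σ t : ℝ) (x z : ι → α) : ℝ :=
  ∏ i, ((1 - σ) * (if x i = z i then 1 else 0) + t)

theorem corruptionKernel_eq_pow_mul_pow (σ t : ℝ) (x z : ι → α) :
    corruptionKernel σ t x z =
      (1 - σ + t) ^ (Fintype.card ι - hammingDist x z) * t ^ hammingDist x z := by
  have agreements : Finset.card {i | x i = z i} = Fintype.card ι - hammingDist x z :=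
    eq_tsub_of_add_eq (Finset.card_filter_add_card_filter_not fun i => x i = z i)
  have factor (i : ι) : (1 - σ) * (if x i = z i then 1 else 0) + t =
      if x i = z i then 1 - σ + t else t := by
    split_ifs <;> ring
  simp_rw [corruptionKernel, factor]
  rw [Finset.prod_ite, Finset.prod_const, Finset.prod_const, agreements, hammingDist]

variable {σ t : ℝ}

theorem corruptionKernel_nonneg (ht : 0 ≤ t) (hσ : σ ≤ 1) (x z : ι → α) :
    0 ≤ corruptionKernel σ t x z :=
  Finset.prod_nonneg fun _ _ =>
    add_nonneg (mul_nonneg (sub_nonneg.2 hσ) (by split_ifs <;> norm_num)) ht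

theorem corruptionKernel_le_pow_hammingDist (ht : 0 ≤ t) (htσ : t ≤ σ) (hσ : σ ≤ 1)
    (x z : ι → α) : corruptionKernel σ t x z ≤ t ^ hammingDist x z := by
  rw [corruptionKernel_eq_pow_mul_pow]
  exact mul_le_of_le_one_left (pow_nonneg ht _) (pow_le_one₀ (by linarith) (by linarith))

theorem abs_corruptionKernel_sub_pow_hammingDist_le (ht : 0 ≤ t) (htσ : t ≤ σ) (hσ : σ ≤ 1)
    (x z : ι → α) :
    |corruptionKernel σ t x z - t ^ hammingDist x z| ≤
      Fintype.card ι * (σ - t) * t ^ hammingDist x z := by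
  rw [abs_sub_comm,
    abs_of_nonneg (sub_nonneg.2 (corruptionKernel_le_pow_hammingDist ht htσ hσ x z)),
    corruptionKernel_eq_pow_mul_pow]
  set d := hammingDist x z
  set m := Fintype.card ι - d
  have bernoulli : 1 + m * (1 - σ + t - 1) ≤ (1 - σ + t) ^ m :=
    one_add_mul_sub_le_pow (by linarith) m
  have hm : (m : ℝ) ≤ Fintype.card ι := by exact_mod_cast Nat.sub_le _ _
  calc
    t ^ d - (1 - σ + t) ^ m * t ^ d = (1 - (1 - σ + t) ^ m) * t ^ d := by ring
    _ ≤ m * (σ - t) * t ^ d := by gcongr; linarith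
    _ ≤ Fintype.card ι * (σ - t) * t ^ d := by gcongr

theorem abs_corruptionKernel_div_sub_ite_le {c : ℝ} (hc : 1 ≤ c) (hσ : σ ∈ Set.Icc 0 1)
    {x z : ι → α} {n : ℕ} (hn : n ≤ hammingDist x z) :
    |corruptionKernel σ (σ / c) x z - if hammingDist x z = n then (σ / c) ^ n else 0| ≤
      Fintype.card ι * c * (σ / c) ^ (n + 1) := by
  have ht : 0 ≤ σ / c := div_nonneg hσ.1 (by linarith)
  have htσ : σ / c ≤ σ := div_le_self hσ.1 hc
  split_ifs with h_eq
  · subst h_eq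
    calc
      _ ≤ Fintype.card ι * (σ - σ / c) * (σ / c) ^ hammingDist x z :=
        abs_corruptionKernel_sub_pow_hammingDist_le ht htσ hσ.2 x z
      _ ≤ Fintype.card ι * σ * (σ / c) ^ hammingDist x z := by gcongr; linarith
      _ = Fintype.card ι * c * (σ / c) ^ (hammingDist x z + 1) := by
        rw [pow_succ']; field_simp
  · have h_lt : n + 1 ≤ hammingDist x z := by lia
    have h_card : (1 : ℝ) ≤ Fintype.card ι := by
      exact_mod_cast (Nat.le_add_left 1 n).trans (h_lt.trans hammingDist_le_card_fintype)
    rw [sub_zero, abs_of_nonneg (corruptionKernel_nonneg ht hσ.2 x z)]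
    calc
      corruptionKernel σ (σ / c) x z ≤ (σ / c) ^ hammingDist x z :=
        corruptionKernel_le_pow_hammingDist ht htσ hσ.2 x z
      _ ≤ (σ / c) ^ (n + 1) := pow_le_pow_of_le_one ht (htσ.trans hσ.2) h_lt
      _ ≤ Fintype.card ι * c * (σ / c) ^ (n + 1) :=
        le_mul_of_one_le_left (pow_nonneg ht _) (one_le_mul_of_one_le_of_one_le h_card hc)

end CorruptionKernel

section Marginal

variable {K H : ℕ} {p : (Fin H → Fin K) → ℝ} (x : Fin H → Fin K)

theorem distSupp_le_hammingDist {z : Fin H → Fin K} (hz : p z ≠ 0) :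
    distSupp K H p x ≤ hammingDist x z :=
  Nat.sInf_le ⟨z, hz, rfl⟩

variable (p)

theorem projMass_eq_sum_ite :
    projMass K H p x = ∑ z, if hammingDist x z = distSupp K H p x then p z else 0 := by
  rw [projMass, Finset.sum_filter]
  refine Finset.sum_congr rfl fun z _ => ?_
  by_cases hz : p z = 0 <;> simp [hz]

theorem qUnif_sub_projMass_mul_pow (σ : ℝ) :
    qUnif K H p σ x - projMass K H p x * (σ / K) ^ distSupp K H p x =
      ∑ z, p z * (corruptionKernel σ (σ / K) x z -
        if hammingDist x z = distSupp K H p x then (σ / K) ^ distSupp K H p x else 0) := by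
  simp only [qUnif, projMass_eq_sum_ite, corruptionKernel, Finset.sum_mul, mul_sub,
    Finset.sum_sub_distrib, mul_ite, ite_mul, mul_zero, zero_mul]

theorem uniform_marginal_small_noise_expansion_general (hK : 1 ≤ K) {σ : ℝ}
    (hσ : σ ∈ Set.Icc 0 1) :
    |qUnif K H p σ x - projMass K H p x * (σ / K) ^ distSupp K H p x| ≤
      H * K * (∑ z, |p z|) * (σ / K) ^ (distSupp K H p x + 1) := by
  have term_le (z : Fin H → Fin K) : |p z * (corruptionKernel σ (σ / K) x z -
      if hammingDist x z = distSupp K H p x then (σ / K) ^ distSupp K H p x else 0)| ≤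
      |p z| * (H * K * (σ / K) ^ (distSupp K H p x + 1)) := by
    by_cases hz : p z = 0
    · simp [hz]
    · rw [abs_mul]
      gcongr
      simpa only [Fintype.card_fin] using
        abs_corruptionKernel_div_sub_ite_le (Nat.one_le_cast.2 hK) hσ
          (distSupp_le_hammingDist x hz)
  rw [qUnif_sub_projMass_mul_pow]
  calc
    _ ≤ ∑ z, |p z| * (H * K * (σ / K) ^ (distSupp K H p x + 1)) :=
      (Finset.abs_sum_le_sum_abs _ _).trans (Finset.sum_le_sum fun z _ => term_le z)
    _ = H * K * (∑ z, |p z|) * (σ / K) ^ (distSupp K H p x + 1) := by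
      rw [← Finset.sum_mul]; ring

end Marginal

/-- Lemma B.1: small-noise expansion of the uniform-corrupted marginal:
`|q_σ(x) − p(proj_D(x)) (σ/K)^{d(x,D)}| ≤ C (σ/K)^{d(x,D)+1}` for small `σ`. -/
theorem uniform_marginal_small_noise_expansion
    (K H : ℕ) (hK : 2 ≤ K) (hH : 1 ≤ H)
    (p : (Fin H → Fin K) → ℝ) (hp0 : ∀ v, 0 ≤ p v) (hp1 : ∑ v, p v = 1)
    (x : Fin H → Fin K) :
    ∃ C > (0 : ℝ), ∃ σ₀ ∈ Set.Ioo (0 : ℝ) 1, ∀ σ ∈ Set.Ioo (0 : ℝ) σ₀,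
      |qUnif K H p σ x - projMass K H p x * (σ / K) ^ (distSupp K H p x)|
        ≤ C * (σ / K) ^ (distSupp K H p x + 1) := by
  refine ⟨H * K, by positivity, 1 / 2, by norm_num, fun σ hσ => ?_⟩
  simpa only [abs_of_nonneg (hp0 _), hp1, mul_one] using
    uniform_marginal_small_noise_expansion_general p x (by lia) ⟨hσ.1.le, by linarith [hσ.2]⟩
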